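/- There holds the identity ∫_ℝ p(p−1) w(x)^{p−2} w'(x) w₁(x) w₂(x) dx = −∫_ℝ w'(x) w₁(x) dx + ∫_ℝ (w'(x) + σ^{−1} x w(x)) w₂'(x) dx. -/

import Mathlib

open Real

/-!
Write `L f = -f'' + f - p w ^ (p - 1) f` for the linearization of `w'' - w + w ^ p = 0` at `w`.
The rescalings `u = λ ^ (1 / (p - 1)) w (√λ x)` solve `u'' - λ u + u ^ p = 0`, and `w₂` is minus
their `λ`-derivative at `λ = 1`; hence `L w₂ = w`. Differentiating this relation in `x` gives
`L w₂' = w' + p (p - 1) w ^ (p - 2) w' w₂`, the last term coming from the potential of `L`. By the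
symmetry of `L`, the identity is `∫ w₁ L w₂' = ∫ (L w₁) w₂'`.

Only the integrability of `w ^ (p - 2) w' w₁ w₂` is delicate, since `p - 2` may be negative. The
energy `w'² / 2 - w² / 2 + w ^ (p + 1) / (p + 1)` is conserved and vanishes at infinity, whence
`|w'| ≤ w` and `w ^ (p - 2) w'` is bounded.
-/

open MeasureTheory Asymptotics Filter Topology

/-- Exponential decay on the whole line: `|f x| ≤ C e^{-a|x|}` for every `x` and some `a > 0`.
The filter `⊤` makes the bound hold everywhere rather than near infinity. -/
def HasExpDecay (f : ℝ → ℝ) : Prop :=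
  ∃ a > 0, f =O[⊤] fun x ↦ exp (-a * |x|)

theorem integrable_exp_neg_mul_abs {a : ℝ} (ha : 0 < a) :
    Integrable fun x : ℝ ↦ exp (-a * |x|) := by
  refine .of_integral_ne_zero ?_
  rw [integral_comp_abs (f := fun x ↦ exp (-a * x)), integral_exp_mul_Ioi (neg_lt_zero.2 ha) 0]
  simp [ha.ne']

theorem isBigO_exp_neg_mul_abs {a b : ℝ} (hab : a ≤ b) :
    (fun x : ℝ ↦ exp (-b * |x|)) =O[⊤] fun x ↦ exp (-a * |x|) :=
  isBigO_of_le _ fun x ↦ by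
    rw [norm_of_nonneg (exp_pos _).le, norm_of_nonneg (exp_pos _).le]
    gcongr

theorem isBigO_id_mul_exp_neg_mul_abs {a b : ℝ} (hab : a < b) :
    (fun x : ℝ ↦ x * exp (-b * |x|)) =O[⊤] fun x ↦ exp (-a * |x|) := by
  refine isBigO_of_le' (c := (b - a)⁻¹) _ fun x ↦ ?_
  have hgap : 0 < b - a := sub_pos.2 hab
  have habs : |x| ≤ (b - a)⁻¹ * exp ((b - a) * |x|) := by
    rw [le_inv_mul_iff₀ hgap]
    linarith [add_one_le_exp ((b - a) * |x|)]
  rw [norm_mul, norm_eq_abs, norm_of_nonneg (exp_pos _).le, norm_of_nonneg (exp_pos _).le]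
  calc |x| * exp (-b * |x|)
      ≤ (b - a)⁻¹ * exp ((b - a) * |x|) * exp (-b * |x|) := by gcongr
    _ = (b - a)⁻¹ * exp (-a * |x|) := by rw [mul_assoc, ← exp_add]; ring_nf

namespace HasExpDecay

variable {f g : ℝ → ℝ}

theorem of_abs_le {C a : ℝ} (ha : 0 < a) (h : ∀ x, |f x| ≤ C * exp (-a * |x|)) :
    HasExpDecay f :=
  ⟨a, ha, isBigO_of_le' _ fun x ↦ by
    simpa only [norm_eq_abs, abs_exp] using h x⟩

theorem add (hf : HasExpDecay f) (hg : HasExpDecay g) : HasExpDecay fun x ↦ f x + g x := by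
  obtain ⟨a, ha, hfa⟩ := hf
  obtain ⟨b, hb, hgb⟩ := hg
  exact ⟨min a b, lt_min ha hb,
    (hfa.trans (isBigO_exp_neg_mul_abs (min_le_left a b))).add
      (hgb.trans (isBigO_exp_neg_mul_abs (min_le_right a b)))⟩

theorem bounded_mul (hf : f =O[⊤] fun _ ↦ (1 : ℝ)) (hg : HasExpDecay g) :
    HasExpDecay fun x ↦ f x * g x := by
  obtain ⟨a, ha, hga⟩ := hg
  exact ⟨a, ha, by simpa only [one_mul] using hf.mul hga⟩

theorem const_mul (c : ℝ) (hf : HasExpDecay f) : HasExpDecay fun x ↦ c * f x :=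
  bounded_mul (isBigO_const_const c one_ne_zero ⊤) hf

theorem sub (hf : HasExpDecay f) (hg : HasExpDecay g) : HasExpDecay fun x ↦ f x - g x := by
  simpa only [neg_one_mul, ← sub_eq_add_neg] using hf.add (hg.const_mul (-1))

theorem id_mul (hf : HasExpDecay f) : HasExpDecay fun x ↦ x * f x := by
  obtain ⟨a, ha, hfa⟩ := hf
  exact ⟨a / 2, half_pos ha,
    ((isBigO_refl (fun x : ℝ ↦ x) ⊤).mul hfa).trans
      (isBigO_id_mul_exp_neg_mul_abs (half_lt_self ha))⟩

theorem isBigO_one (hf : HasExpDecay f) : f =O[⊤] fun _ ↦ (1 : ℝ) := by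
  obtain ⟨a, ha, hfa⟩ := hf
  simpa using hfa.trans (isBigO_exp_neg_mul_abs ha.le)

theorem rpow_isBigO_one (hf : HasExpDecay f) {r : ℝ} (hr : 0 ≤ r) :
    (fun x ↦ f x ^ r) =O[⊤] fun _ ↦ (1 : ℝ) := by
  simpa only [one_rpow] using hf.isBigO_one.rpow hr (.of_forall fun _ ↦ zero_le_one)

theorem integrable (hf : HasExpDecay f) (hfc : Continuous f) : Integrable f := by
  obtain ⟨a, ha, hfa⟩ := hf
  obtain ⟨C, hC⟩ := isBigO_top.1 hfa
  exact ((integrable_exp_neg_mul_abs ha).norm.const_mul C).mono' hfc.aestronglyMeasurable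
    (.of_forall hC)

theorem integrable_mul (hf : HasExpDecay f) (hfc : Continuous f)
    (hg : g =O[⊤] fun _ ↦ (1 : ℝ)) (hgc : Continuous g) : Integrable fun x ↦ f x * g x := by
  simpa only [mul_comm] using (bounded_mul hg hf).integrable (hgc.mul hfc)

theorem tendsto_atTop (hf : HasExpDecay f) : Tendsto f atTop (𝓝 0) := by
  obtain ⟨a, ha, hfa⟩ := hf
  exact (hfa.mono le_top).trans_tendsto <|
    tendsto_exp_atBot.comp (tendsto_abs_atTop_atTop.const_mul_atTop_of_neg (neg_lt_zero.2 ha))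

end HasExpDecay

theorem isBigO_one_of_abs_add_abs_le {α : Type*} {f g : α → ℝ}
    (h : ∃ M, ∀ x, |f x| + |g x| ≤ M) :
    (f =O[⊤] fun _ ↦ (1 : ℝ)) ∧ g =O[⊤] fun _ ↦ (1 : ℝ) := by
  obtain ⟨M, hM⟩ := h
  constructor <;> refine isBigO_of_le' (c := M) _ fun x ↦ ?_ <;>
    rw [norm_one, mul_one, norm_eq_abs] <;>
    linarith [hM x, abs_nonneg (f x), abs_nonneg (g x)]

theorem sq_velocity_eq_of_tendsto_zero {w v F φ : ℝ → ℝ} (hw : ∀ x, HasDerivAt w (v x) x)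
    (hv : ∀ x, HasDerivAt v (φ (w x)) x) (hF : ∀ x, HasDerivAt F (φ (w x)) (w x))
    (hv₀ : Tendsto v atTop (𝓝 0)) (hF₀ : Tendsto (fun x ↦ F (w x)) atTop (𝓝 0)) (x : ℝ) :
    v x ^ 2 = 2 * F (w x) := by
  have hconserved : ∀ y, HasDerivAt (fun y ↦ v y ^ 2 - 2 * F (w y)) 0 y := fun y ↦
    (((hv y).pow 2).sub (((hF y).comp y (hw y)).const_mul 2)).congr_deriv (by
      push_cast; ring)
  have hconst : ∀ y, v x ^ 2 - 2 * F (w x) = v y ^ 2 - 2 * F (w y) := fun y ↦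
    is_const_of_deriv_eq_zero (fun y ↦ (hconserved y).differentiableAt)
      (fun y ↦ (hconserved y).deriv) x y
  have hlim : Tendsto (fun y ↦ v y ^ 2 - 2 * F (w y)) atTop (𝓝 0) := by
    simpa using (hv₀.pow 2).sub (hF₀.const_mul 2)
  have hzero : v x ^ 2 - 2 * F (w x) = 0 :=
    tendsto_nhds_unique (tendsto_const_nhds.congr hconst) hlim
  linarith

/-- The one-dimensional Schrödinger operator `f ↦ -f'' + V f` with potential `V`. -/
noncomputable def schrodingerOp (V f : ℝ → ℝ) (x : ℝ) : ℝ :=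
  -deriv (deriv f) x + V x * f x

theorem schrodingerOp_deriv {V f : ℝ → ℝ} {x : ℝ} (hV : DifferentiableAt ℝ V x)
    (hf : DifferentiableAt ℝ f x) (hf'' : DifferentiableAt ℝ (deriv (deriv f)) x) :
    schrodingerOp V (deriv f) x = deriv (schrodingerOp V f) x - deriv V x * f x := by
  have hderiv : HasDerivAt (schrodingerOp V f)
      (-deriv (deriv (deriv f)) x + (deriv V x * f x + V x * deriv f x)) x :=
    hf''.hasDerivAt.neg.add (hV.hasDerivAt.mul hf.hasDerivAt)
  rw [hderiv.deriv, schrodingerOp]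
  ring

theorem integral_mul_schrodingerOp {V f g : ℝ → ℝ} (hf : Differentiable ℝ f)
    (hf' : Differentiable ℝ (deriv f)) (hg : Differentiable ℝ g)
    (hg' : Differentiable ℝ (deriv g))
    (hwronskian : Integrable fun x ↦ f x * deriv g x - deriv f x * g x)
    (hfLg : Integrable fun x ↦ f x * schrodingerOp V g x)
    (hLfg : Integrable fun x ↦ schrodingerOp V f x * g x) :
    ∫ x, f x * schrodingerOp V g x = ∫ x, schrodingerOp V f x * g x := by
  have hderiv : ∀ x, HasDerivAt (fun x ↦ f x * deriv g x - deriv f x * g x)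
      (schrodingerOp V f x * g x - f x * schrodingerOp V g x) x := fun x ↦
    (((hf x).hasDerivAt.mul (hg' x).hasDerivAt).sub
      ((hf' x).hasDerivAt.mul (hg x).hasDerivAt)).congr_deriv (by
        simp only [schrodingerOp]; ring)
  have hzero := integral_eq_zero_of_hasDerivAt_of_integrable hderiv (hLfg.sub hfLg) hwronskian
  rw [integral_sub hLfg hfLg] at hzero
  linarith

/-- The linearization `f ↦ -f'' + f - p w ^ (p - 1) f` of `-w'' + w - w ^ p` at `w`. -/
noncomputable def linearizedOp (p : ℝ) (w : ℝ → ℝ) : (ℝ → ℝ) → ℝ → ℝ :=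
  schrodingerOp fun x ↦ 1 - p * w x ^ (p - 1)

theorem linearizedOp_apply (p : ℝ) (w f : ℝ → ℝ) (x : ℝ) :
    linearizedOp p w f x = -deriv (deriv f) x + f x - p * w x ^ (p - 1) * f x := by
  rw [linearizedOp, schrodingerOp]
  ring

/-- The generator `-w / (p - 1) - x w' / 2` of the scaling symmetry, called `w₂` in the theorem;
it is minus the derivative at `λ = 1` of `λ ^ (1 / (p - 1)) w (√λ x)`. -/
noncomputable def scalingMode (p : ℝ) (w : ℝ → ℝ) (x : ℝ) : ℝ :=
  -w x / (p - 1) - 1 / 2 * x * deriv w x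

theorem hasExpDecay_scalingMode (p : ℝ) {w : ℝ → ℝ} (hw : HasExpDecay w)
    (hw' : HasExpDecay (deriv w)) : HasExpDecay (scalingMode p w) := by
  convert (hw.const_mul (-1 / (p - 1))).sub (hw'.id_mul.const_mul (1 / 2)) using 2 with x
  rw [scalingMode]
  ring

/-- Positive `C²` solutions of `w'' - w + w ^ p = 0` on the line. -/
structure IsPositiveSolution (p : ℝ) (w : ℝ → ℝ) : Prop where
  pos : ∀ x, 0 < w x
  contDiff : ContDiff ℝ 2 w
  equation : ∀ x, deriv (deriv w) x - w x + w x ^ p = 0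

namespace IsPositiveSolution

variable {p : ℝ} {w : ℝ → ℝ} (hw : IsPositiveSolution p w)
include hw

theorem hasDerivAt (x : ℝ) : HasDerivAt w (deriv w x) x :=
  (hw.contDiff.differentiable two_ne_zero x).hasDerivAt

theorem hasDerivAt_deriv (x : ℝ) : HasDerivAt (deriv w) (w x - w x ^ p) x := by
  have hequation : deriv (deriv w) x = w x - w x ^ p := by linarith [hw.equation x]
  rw [← hequation]
  exact (hw.contDiff.differentiable_deriv_two x).hasDerivAt

theorem continuous : Continuous w := hw.contDiff.continuous

theorem continuous_deriv : Continuous (deriv w) := hw.contDiff.continuous_deriv one_le_two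

theorem hasDerivAt_rpow (r x : ℝ) :
    HasDerivAt (fun x ↦ w x ^ r) (deriv w x * r * w x ^ (r - 1)) x :=
  (hw.hasDerivAt x).rpow_const (.inl (hw.pos x).ne')

theorem continuous_rpow (r : ℝ) : Continuous fun x ↦ w x ^ r :=
  hw.continuous.rpow_const fun x ↦ .inl (hw.pos x).ne'

theorem rpow_sub_one_mul (r x : ℝ) : w x ^ (r - 1) * w x = w x ^ r := by
  rw [← rpow_add_one (hw.pos x).ne', sub_add_cancel]

theorem hasDerivAt_potential (x : ℝ) :
    HasDerivAt (fun x ↦ 1 - p * w x ^ (p - 1))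
      (-(p * (p - 1) * w x ^ (p - 2) * deriv w x)) x :=
  (((hw.hasDerivAt_rpow (p - 1) x).const_mul p).const_sub 1).congr_deriv (by
    rw [show p - 1 - 1 = p - 2 by ring]; ring)

theorem hasDerivAt_scalingMode (x : ℝ) :
    HasDerivAt (scalingMode p w)
      (-deriv w x / (p - 1) - (deriv w x + x * (w x - w x ^ p)) / 2) x :=
  (((hw.hasDerivAt x).neg.div_const (p - 1)).sub
    (((hasDerivAt_id x).const_mul (1 / 2)).mul (hw.hasDerivAt_deriv x))).congr_deriv (by
      simp only [id]; ring)

theorem deriv_scalingMode :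
    deriv (scalingMode p w) =
      fun x ↦ -deriv w x / (p - 1) - (deriv w x + x * (w x - w x ^ p)) / 2 :=
  funext fun x ↦ (hw.hasDerivAt_scalingMode x).deriv

theorem hasDerivAt_deriv_scalingMode (hp : p ≠ 1) (x : ℝ) :
    HasDerivAt (deriv (scalingMode p w))
      ((1 - p * w x ^ (p - 1)) * scalingMode p w x - w x) x := by
  rw [hw.deriv_scalingMode]
  refine (((hw.hasDerivAt_deriv x).neg.div_const (p - 1)).sub
    (((hw.hasDerivAt_deriv x).add ((hasDerivAt_id x).mul
      ((hw.hasDerivAt x).sub (hw.hasDerivAt_rpow p x)))).div_const 2)).congr_deriv ?_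
  have hp' : p - 1 ≠ 0 := sub_ne_zero.2 hp
  simp only [id, Pi.sub_apply, scalingMode, ← hw.rpow_sub_one_mul p x]
  field_simp
  ring

theorem differentiable_scalingMode : Differentiable ℝ (scalingMode p w) := fun x ↦
  (hw.hasDerivAt_scalingMode x).differentiableAt

theorem differentiable_deriv_scalingMode (hp : p ≠ 1) :
    Differentiable ℝ (deriv (scalingMode p w)) := fun x ↦
  (hw.hasDerivAt_deriv_scalingMode hp x).differentiableAt

theorem deriv_deriv_scalingMode (hp : p ≠ 1) :
    deriv (deriv (scalingMode p w)) =
      fun x ↦ (1 - p * w x ^ (p - 1)) * scalingMode p w x - w x :=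
  funext fun x ↦ (hw.hasDerivAt_deriv_scalingMode hp x).deriv

theorem differentiable_deriv_deriv_scalingMode (hp : p ≠ 1) :
    Differentiable ℝ (deriv (deriv (scalingMode p w))) := by
  rw [hw.deriv_deriv_scalingMode hp]
  exact fun x ↦ ((hw.hasDerivAt_potential x).differentiableAt.mul
    (hw.differentiable_scalingMode x)).sub (hw.hasDerivAt x).differentiableAt

theorem linearizedOp_scalingMode (hp : p ≠ 1) : linearizedOp p w (scalingMode p w) = w := by
  ext x
  rw [linearizedOp_apply, hw.deriv_deriv_scalingMode hp]
  ring

theorem linearizedOp_deriv_scalingMode (hp : p ≠ 1) (x : ℝ) :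
    linearizedOp p w (deriv (scalingMode p w)) x =
      deriv w x + p * (p - 1) * w x ^ (p - 2) * deriv w x * scalingMode p w x := by
  have hpotential := hw.hasDerivAt_potential x
  have hcommutator := schrodingerOp_deriv hpotential.differentiableAt
    (hw.differentiable_scalingMode x) (hw.differentiable_deriv_deriv_scalingMode hp x)
  rw [← linearizedOp, hw.linearizedOp_scalingMode hp, hpotential.deriv] at hcommutator
  rw [hcommutator]
  ring

end IsPositiveSolution

/-- Positive solutions of `w'' - w + w ^ p = 0` that decay exponentially together with their
derivative. -/
structure IsGroundState (p : ℝ) (w : ℝ → ℝ) : Prop extends IsPositiveSolution p w where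
  decay : HasExpDecay w
  decay_deriv : HasExpDecay (deriv w)

namespace IsGroundState

variable {p : ℝ} {w : ℝ → ℝ}

theorem of_add_abs_deriv_le (hw : IsPositiveSolution p w) {C a : ℝ} (ha : 0 < a)
    (hbound : ∀ x, w x + |deriv w x| ≤ C * exp (-a * |x|)) : IsGroundState p w := by
  refine ⟨hw, .of_abs_le (C := C) ha fun x ↦ ?_, .of_abs_le (C := C) ha fun x ↦ ?_⟩
  · linarith [hbound x, abs_of_pos (hw.pos x), abs_nonneg (deriv w x)]
  · linarith [hbound x, hw.pos x]

variable (hw : IsGroundState p w)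
include hw

theorem abs_deriv_le (hp : -1 < p) (x : ℝ) : |deriv w x| ≤ w x := by
  have hp' : 0 < p + 1 := by linarith
  have hprimitive : ∀ x, HasDerivAt (fun y : ℝ ↦ y ^ 2 / 2 - y ^ (p + 1) / (p + 1))
      (w x - w x ^ p) (w x) := fun x ↦
    (((hasDerivAt_pow 2 (w x)).div_const 2).sub
      ((hasDerivAt_rpow_const (.inl (hw.pos x).ne')).div_const (p + 1))).congr_deriv (by
        rw [add_sub_cancel_right]; push_cast; field_simp)
  have hlim : Tendsto (fun x ↦ w x ^ 2 / 2 - w x ^ (p + 1) / (p + 1)) atTop (𝓝 0) := by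
    simpa [zero_rpow hp'.ne'] using ((hw.decay.tendsto_atTop.pow 2).div_const 2).sub
      ((hw.decay.tendsto_atTop.rpow_const (.inr hp'.le)).div_const (p + 1))
  have henergy := sq_velocity_eq_of_tendsto_zero (φ := fun y ↦ y - y ^ p) hw.hasDerivAt
    hw.hasDerivAt_deriv hprimitive hw.decay_deriv.tendsto_atTop hlim x
  have hnonneg : 0 ≤ w x ^ (p + 1) / (p + 1) :=
    div_nonneg (rpow_nonneg (hw.pos x).le _) hp'.le
  exact abs_le_of_sq_le_sq (by linarith) (hw.pos x).le

theorem rpow_sub_two_mul_deriv_isBigO_one (hp : 1 ≤ p) :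
    (fun x ↦ w x ^ (p - 2) * deriv w x) =O[⊤] fun _ ↦ (1 : ℝ) := by
  refine (isBigO_of_le _ fun x ↦ ?_).trans (hw.decay.rpow_isBigO_one (sub_nonneg.2 hp))
  have hpow : 0 ≤ w x ^ (p - 2) := rpow_nonneg (hw.pos x).le _
  rw [norm_mul, norm_of_nonneg hpow, norm_of_nonneg (rpow_nonneg (hw.pos x).le _),
    ← hw.rpow_sub_one_mul (p - 1), show p - 1 - 1 = p - 2 by ring]
  gcongr
  exact hw.abs_deriv_le (by linarith) x

theorem potential_isBigO_one (hp : 1 ≤ p) :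
    (fun x ↦ 1 - p * w x ^ (p - 1)) =O[⊤] fun _ ↦ (1 : ℝ) :=
  (isBigO_refl _ ⊤).sub ((hw.decay.rpow_isBigO_one (sub_nonneg.2 hp)).const_mul_left p)

theorem decay_rpow (hp : 1 ≤ p) : HasExpDecay fun x ↦ w x ^ p := by
  simpa only [hw.rpow_sub_one_mul] using
    HasExpDecay.bounded_mul (hw.decay.rpow_isBigO_one (sub_nonneg.2 hp)) hw.decay

theorem decay_deriv_scalingMode (hp : 1 ≤ p) : HasExpDecay (deriv (scalingMode p w)) := by
  rw [hw.deriv_scalingMode]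
  convert (hw.decay_deriv.const_mul (-1 / (p - 1))).sub
    ((hw.decay_deriv.add (hw.decay.sub (hw.decay_rpow hp)).id_mul).const_mul (1 / 2)) using 2
  ring

theorem decay_deriv_deriv_scalingMode (hp : 1 < p) :
    HasExpDecay (deriv (deriv (scalingMode p w))) := by
  rw [hw.deriv_deriv_scalingMode hp.ne']
  exact (HasExpDecay.bounded_mul (hw.potential_isBigO_one hp.le)
    (hasExpDecay_scalingMode p hw.decay hw.decay_deriv)).sub hw.decay

theorem integrable_rpow_mul_deriv_mul_scalingMode (hp : 1 ≤ p) {f : ℝ → ℝ} (hf : Continuous f)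
    (hf_bdd : f =O[⊤] fun _ ↦ (1 : ℝ)) :
    Integrable fun x ↦ p * (p - 1) * w x ^ (p - 2) * deriv w x * f x * scalingMode p w x := by
  have hdecay := HasExpDecay.bounded_mul (hw.rpow_sub_two_mul_deriv_isBigO_one hp)
    (HasExpDecay.bounded_mul hf_bdd (hasExpDecay_scalingMode p hw.decay hw.decay_deriv))
  have hcont := ((hw.continuous_rpow (p - 2)).mul hw.continuous_deriv).mul
    (hf.mul hw.differentiable_scalingMode.continuous)
  convert (hdecay.integrable hcont).const_mul (p * (p - 1)) using 2
  ring

theorem integrable_wronskian_deriv_scalingMode (hp : 1 < p) {f : ℝ → ℝ} (hf : Continuous f)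
    (hf' : Continuous (deriv f)) (hf_bdd : f =O[⊤] fun _ ↦ (1 : ℝ))
    (hf'_bdd : deriv f =O[⊤] fun _ ↦ (1 : ℝ)) :
    Integrable fun x ↦ f x * deriv (deriv (scalingMode p w)) x
      - deriv f x * deriv (scalingMode p w) x :=
  ((HasExpDecay.bounded_mul hf_bdd (hw.decay_deriv_deriv_scalingMode hp)).sub
    (HasExpDecay.bounded_mul hf'_bdd (hw.decay_deriv_scalingMode hp.le))).integrable <|
      (hf.mul (hw.differentiable_deriv_deriv_scalingMode hp.ne').continuous).sub
        (hf'.mul (hw.differentiable_deriv_scalingMode hp.ne').continuous)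

theorem integrable_source_mul_deriv_scalingMode (hp : 1 < p) (c : ℝ) :
    Integrable fun x ↦ (deriv w x + c * x * w x) * deriv (scalingMode p w) x := by
  have hsource : HasExpDecay fun x ↦ deriv w x + c * x * w x := by
    simpa only [mul_assoc] using hw.decay_deriv.add (hw.decay.id_mul.const_mul c)
  exact hsource.integrable_mul
    (hw.continuous_deriv.add ((continuous_const.mul continuous_id).mul hw.continuous))
    (hw.decay_deriv_scalingMode hp.le).isBigO_one
    (hw.differentiable_deriv_scalingMode hp.ne').continuous

end IsGroundState

theorem integral_identity_w1_w2_general {p : ℝ} {w f g : ℝ → ℝ} (hp : 1 < p)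
    (hw : IsGroundState p w) (hf : Differentiable ℝ f) (hf' : Differentiable ℝ (deriv f))
    (hf_bdd : f =O[⊤] fun _ ↦ (1 : ℝ)) (hf'_bdd : deriv f =O[⊤] fun _ ↦ (1 : ℝ))
    (hLf : linearizedOp p w f = g) (hg : Integrable fun x ↦ g x * deriv (scalingMode p w) x) :
    ∫ x, p * (p - 1) * w x ^ (p - 2) * deriv w x * f x * scalingMode p w x =
      -(∫ x, deriv w x * f x) + ∫ x, g x * deriv (scalingMode p w) x := by
  subst hLf
  have hint_linear := hw.decay_deriv.integrable_mul hw.continuous_deriv hf_bdd hf.continuous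
  have hint_quadratic := hw.integrable_rpow_mul_deriv_mul_scalingMode hp.le hf.continuous hf_bdd
  have hexpand : (fun x ↦ f x * linearizedOp p w (deriv (scalingMode p w)) x) = fun x ↦
      deriv w x * f x + p * (p - 1) * w x ^ (p - 2) * deriv w x * f x * scalingMode p w x := by
    ext x
    rw [hw.linearizedOp_deriv_scalingMode hp.ne']
    ring
  have hsymm : ∫ x, f x * linearizedOp p w (deriv (scalingMode p w)) x =
      ∫ x, linearizedOp p w f x * deriv (scalingMode p w) x :=
    integral_mul_schrodingerOp hf hf' (hw.differentiable_deriv_scalingMode hp.ne')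
      (hw.differentiable_deriv_deriv_scalingMode hp.ne')
      (hw.integrable_wronskian_deriv_scalingMode hp hf.continuous hf'.continuous hf_bdd hf'_bdd)
      (hexpand ▸ hint_linear.add hint_quadratic) hg
  rw [hexpand, integral_add hint_linear hint_quadratic] at hsymm
  linarith

/-- The identity
`∫ p(p−1) w^(p−2) w' w₁ w₂ = −∫ w' w₁ + ∫ (w' + σ⁻¹ x w) w₂'`. -/
theorem integral_identity_w1_w2
    (p : ℝ) (hp : 1 < p) (σ : ℝ) (hσ : σ = (p + 1) / (p - 1) - 1 / 2)
    (w : ℝ → ℝ)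
    (hw_pos : ∀ x, 0 < w x)
    (hw_smooth : ContDiff ℝ 2 w)
    (hw_eq : ∀ x, deriv (deriv w) x - w x + w x ^ p = 0)
    (hdecay : ∃ C₀ > (0:ℝ), ∃ a > (0:ℝ),
      ∀ x : ℝ, w x + |deriv w x| ≤ C₀ * Real.exp (-a * |x|))
    (w₂ : ℝ → ℝ)
    (hw₂ : w₂ = fun x => -(w x) / (p - 1) - (1 / 2) * x * deriv w x)
    (w₁ : ℝ → ℝ)
    (hw₁_smooth : ContDiff ℝ 2 w₁)
    (hw₁_bdd : ∃ M : ℝ, ∀ x : ℝ, |w₁ x| + |deriv w₁ x| ≤ M)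
    (hw₁_eq : ∀ x : ℝ,
      -(deriv (deriv w₁) x) + w₁ x - p * w x ^ (p - 1) * w₁ x
        = deriv w x + σ⁻¹ * x * w x) :
    (∫ x : ℝ, p * (p - 1) * w x ^ (p - 2) * deriv w x * w₁ x * w₂ x)
      = -(∫ x : ℝ, deriv w x * w₁ x)
        + ∫ x : ℝ, (deriv w x + σ⁻¹ * x * w x) * deriv w₂ x := by
  obtain ⟨C, -, a, ha, hbound⟩ := hdecay
  have hw : IsGroundState p w := .of_add_abs_deriv_le ⟨hw_pos, hw_smooth, hw_eq⟩ ha hbound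
  obtain ⟨hw₁_isBigO, hw₁'_isBigO⟩ := isBigO_one_of_abs_add_abs_le hw₁_bdd
  have hLw₁ : linearizedOp p w w₁ = fun x ↦ deriv w x + σ⁻¹ * x * w x :=
    funext fun x ↦ (linearizedOp_apply p w w₁ x).trans (hw₁_eq x)
  obtain rfl : w₂ = scalingMode p w := hw₂
  exact integral_identity_w1_w2_general hp hw (hw₁_smooth.differentiable two_ne_zero)
    hw₁_smooth.differentiable_deriv_two hw₁_isBigO hw₁'_isBigO hLw₁
    (hw.integrable_source_mul_deriv_scalingMode hp σ⁻¹)
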